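/- Any graph G that is triangle-free and in which any two chordless cycles share at most one edge is planar. -/

import Mathlib

open SimpleGraph
variable {V : Type*}

/-- A cycle is chordless if every edge of `G` joining two vertices of the cycle is an
edge of the cycle (equivalently, no edge of `G` joins two non-consecutive vertices). -/
def IsChordlessCycle {G : SimpleGraph V} {v : V} (c : G.Walk v v) : Prop :=
  c.IsCycle ∧ ∀ x y, x ∈ c.support → y ∈ c.support → G.Adj x y → s(x, y) ∈ c.edges

/-- The edge sets of chordless cycles of `G`. -/
def chordlessCycleSets (G : SimpleGraph V) : Set (Set (Sym2 V)) :=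
  {S | ∃ (v : V) (c : G.Walk v v), IsChordlessCycle c ∧ S = {e | e ∈ c.edges}}

/-- `G` is triangle-free: it has no cycle of length 3. -/
def TriangleFree (G : SimpleGraph V) : Prop :=
  ∀ (v : V) (c : G.Walk v v), c.IsCycle → c.length ≠ 3

/-- Any two (distinct) chordless cycles of `G` share at most one edge. -/
def ChordlessCyclesShareAtMostOneEdge (G : SimpleGraph V) : Prop :=
  ∀ S ∈ chordlessCycleSets G, ∀ T ∈ chordlessCycleSets G, S ≠ T → (S ∩ T).ncard ≤ 1

/-- A topological planar embedding of a graph: an injective placement of the vertices in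
the plane together with, for each edge, a simple curve joining the images of its endpoints,
such that the interiors of the curves avoid the vertices and are pairwise disjoint. -/
def IsPlanar (G : SimpleGraph V) : Prop :=
  ∃ (p : V → EuclideanSpace ℝ (Fin 2)) (c : Sym2 V → ℝ → EuclideanSpace ℝ (Fin 2)),
    Function.Injective p ∧
    (∀ e ∈ G.edgeSet, ContinuousOn (c e) (Set.Icc (0:ℝ) 1) ∧
      Set.InjOn (c e) (Set.Icc (0:ℝ) 1)) ∧
    (∀ u w, G.Adj u w →
      (c s(u, w) 0 = p u ∧ c s(u, w) 1 = p w) ∨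
      (c s(u, w) 0 = p w ∧ c s(u, w) 1 = p u)) ∧
    (∀ e ∈ G.edgeSet, ∀ t ∈ Set.Ioo (0:ℝ) 1, c e t ∉ Set.range p) ∧
    (∀ e ∈ G.edgeSet, ∀ f ∈ G.edgeSet, e ≠ f →
      ∀ s ∈ Set.Ioo (0:ℝ) 1, ∀ t ∈ Set.Ioo (0:ℝ) 1, c e s ≠ c f t)

/-- An outerplanar embedding: a planar embedding with all vertices on the unit circle and
the interiors of all edge curves inside the open unit disk. -/
def IsOuterplanar (G : SimpleGraph V) : Prop :=
  ∃ (p : V → EuclideanSpace ℝ (Fin 2)) (c : Sym2 V → ℝ → EuclideanSpace ℝ (Fin 2)),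
    Function.Injective p ∧
    (∀ v, ‖p v‖ = 1) ∧
    (∀ e ∈ G.edgeSet, ContinuousOn (c e) (Set.Icc (0:ℝ) 1) ∧
      Set.InjOn (c e) (Set.Icc (0:ℝ) 1)) ∧
    (∀ u w, G.Adj u w →
      (c s(u, w) 0 = p u ∧ c s(u, w) 1 = p w) ∨
      (c s(u, w) 0 = p w ∧ c s(u, w) 1 = p u)) ∧
    (∀ e ∈ G.edgeSet, ∀ t ∈ Set.Ioo (0:ℝ) 1, ‖c e t‖ < 1) ∧
    (∀ e ∈ G.edgeSet, ∀ t ∈ Set.Ioo (0:ℝ) 1, c e t ∉ Set.range p) ∧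
    (∀ e ∈ G.edgeSet, ∀ f ∈ G.edgeSet, e ≠ f →
      ∀ s ∈ Set.Ioo (0:ℝ) 1, ∀ t ∈ Set.Ioo (0:ℝ) 1, c e s ≠ c f t)

/-!
Grow a set `S` of vertices of `G` subject to the condition that any two vertices of `S` joined by a
walk outside `S` are adjacent. If such a walk exists, a shortest one closes up with the edge between
its ends to an induced cycle and is added to `S`; otherwise a single vertex with at most one
neighbour in `S` is added. The condition survives because it holds for the vertex set of every
induced cycle `C`: a shortest walk violating it would, together with one of the two arcs of `C`
between its ends, form a second induced cycle sharing two edges with `C`.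

Since `G` is triangle-free, the interior vertices of an added walk are attached to the rest of `S`
only at its two ends. So, after adding diagonals, each new vertex is joined to a clique of at most
two old ones, and graphs built in this way have straight-line drawings: reserve on every edge an
empty triangle, put the new vertex at its centroid and subdivide.
-/

section Triangles

variable {E : Type*} [AddCommGroup E] [Module ℝ E]

/-- A triangle with a distinguished side, the base from `left` to `right`. In a straight-line
drawing the base is an edge, and the triangle is the room reserved for what is drawn on top of
that edge later on. -/
structure BasedTriangle (E : Type*) where
  left : E
  right : E
  apex : E

namespace BasedTriangle

variable {t : BasedTriangle E} {P Q : ℝ → ℝ → ℝ → Prop} {x : E}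

/-- The unordered pair of end points of the base. -/
def base (t : BasedTriangle E) : Sym2 E := s(t.left, t.right)

/-- The three corners are affinely independent. -/
def Nondegenerate (t : BasedTriangle E) : Prop :=
  LinearIndependent ℝ ![t.right - t.left, t.apex - t.left]

/-- The points whose barycentric coordinates, in the order left, right, apex, satisfy `P`. -/
def region (t : BasedTriangle E) (P : ℝ → ℝ → ℝ → Prop) : Set E :=
  {x | ∃ a b c, a + b + c = 1 ∧ P a b c ∧ a • t.left + b • t.right + c • t.apex = x}

/-- The open triangle together with its open base. -/
def cell (t : BasedTriangle E) : Set E := t.region fun a b c ↦ 0 < a ∧ 0 < b ∧ 0 ≤ c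

/-- The centroid, written with the barycentric coordinates used for `region`. -/
noncomputable def centroid (t : BasedTriangle E) : E :=
  (1 / 3 : ℝ) • t.left + (1 / 3 : ℝ) • t.right + (1 / 3 : ℝ) • t.apex

/-- The child on the same base. -/
noncomputable def baseChild (t : BasedTriangle E) : BasedTriangle E :=
  ⟨t.left, t.right, t.centroid⟩

/-- The child based on the segment from the left corner to the centroid. -/
noncomputable def leftChild (t : BasedTriangle E) : BasedTriangle E :=
  ⟨t.left, t.centroid, t.apex⟩

/-- The child based on the segment from the centroid to the right corner. -/
noncomputable def rightChild (t : BasedTriangle E) : BasedTriangle E :=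
  ⟨t.centroid, t.right, t.apex⟩

/-- The three triangles into which the centroid divides `t`. -/
def children (t : BasedTriangle E) : Set (BasedTriangle E) :=
  {t.baseChild, t.leftChild, t.rightChild}

/-- Replace the triangle `t` of the family `F` by its three children. -/
def subdivide (t : BasedTriangle E) (F : Set (BasedTriangle E)) : Set (BasedTriangle E) :=
  F \ {t} ∪ t.children

lemma region_mono (h : ∀ a b c, P a b c → Q a b c) : t.region P ⊆ t.region Q :=
  fun _ ⟨a, b, c, hsum, hP, hx⟩ ↦ ⟨a, b, c, hsum, h a b c hP, hx⟩

lemma Nondegenerate.coord_unique (ht : t.Nondegenerate) {a b c a' b' c' : ℝ}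
    (hsum : a + b + c = 1) (hsum' : a' + b' + c' = 1)
    (h : a • t.left + b • t.right + c • t.apex = a' • t.left + b' • t.right + c' • t.apex) :
    a = a' ∧ b = b' ∧ c = c' := by
  have hzero : (b - b') • (t.right - t.left) + (c - c') • (t.apex - t.left) = 0 := by
    obtain rfl : a = 1 - b - c := by linarith
    obtain rfl : a' = 1 - b' - c' := by linarith
    rw [← sub_eq_zero.2 h]
    module
  obtain ⟨hb, hc⟩ := LinearIndependent.pair_iff.1 ht _ _ hzero
  exact ⟨by linarith, by linarith, by linarith⟩

lemma Nondegenerate.disjoint_region (ht : t.Nondegenerate)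
    (h : ∀ a b c, P a b c → ¬ Q a b c) : Disjoint (t.region P) (t.region Q) := by
  rw [Set.disjoint_left]
  rintro _ ⟨a, b, c, hsum, hP, rfl⟩ ⟨a', b', c', hsum', hQ, hx⟩
  obtain ⟨rfl, rfl, rfl⟩ := ht.coord_unique hsum hsum' hx.symm
  exact h _ _ _ hP hQ

lemma left_mem_region (h : P 1 0 0) : t.left ∈ t.region P :=
  ⟨1, 0, 0, by norm_num, h, by module⟩

lemma right_mem_region (h : P 0 1 0) : t.right ∈ t.region P :=
  ⟨0, 1, 0, by norm_num, h, by module⟩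

lemma centroid_mem_region (h : P (1 / 3) (1 / 3) (1 / 3)) : t.centroid ∈ t.region P :=
  ⟨1 / 3, 1 / 3, 1 / 3, by norm_num, h, rfl⟩

lemma centroid_mem_cell : t.centroid ∈ t.cell :=
  centroid_mem_region (by norm_num)

lemma openSegment_subset_cell {x y : E} (h : t.base = s(x, y)) : openSegment ℝ x y ⊆ t.cell := by
  wlog hxy : t.left = x ∧ t.right = y generalizing x y
  · have hyx := (Sym2.eq_iff.1 h).resolve_left hxy
    rw [openSegment_symm]
    exact this (h.trans Sym2.eq_swap) hyx
  obtain ⟨rfl, rfl⟩ := hxy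
  rintro _ ⟨a, b, ha, hb, hab, rfl⟩
  exact ⟨a, b, 0, by linarith, ⟨ha, hb, le_rfl⟩, by module⟩

lemma cell_baseChild_subset :
    t.baseChild.cell ⊆ t.region fun a b c ↦ 0 ≤ c ∧ c < a ∧ c < b := by
  rintro _ ⟨a, b, c, hsum, ⟨ha, hb, hc⟩, rfl⟩
  refine ⟨a + c / 3, b + c / 3, c / 3, by linarith, ⟨by linarith, by linarith, by linarith⟩, ?_⟩
  simp only [baseChild, centroid]
  module

lemma cell_leftChild_subset :
    t.leftChild.cell ⊆ t.region fun a b c ↦ 0 < b ∧ b < a ∧ b ≤ c := by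
  rintro _ ⟨a, b, c, hsum, ⟨ha, hb, hc⟩, rfl⟩
  refine ⟨a + b / 3, b / 3, c + b / 3, by linarith, ⟨by linarith, by linarith, by linarith⟩, ?_⟩
  simp only [leftChild, centroid]
  module

lemma cell_rightChild_subset :
    t.rightChild.cell ⊆ t.region fun a b c ↦ 0 < a ∧ a < b ∧ a ≤ c := by
  rintro _ ⟨a, b, c, hsum, ⟨ha, hb, hc⟩, rfl⟩
  refine ⟨a / 3, b + a / 3, c + a / 3, by linarith, ⟨by linarith, by linarith, by linarith⟩, ?_⟩
  simp only [rightChild, centroid]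
  module

lemma cell_child_subset {s : BasedTriangle E} (hs : s ∈ t.children) : s.cell ⊆ t.cell := by
  obtain rfl | rfl | rfl := hs
  · exact cell_baseChild_subset.trans (region_mono fun a b c h ↦ by grind)
  · exact cell_leftChild_subset.trans (region_mono fun a b c h ↦ by grind)
  · exact cell_rightChild_subset.trans (region_mono fun a b c h ↦ by grind)

lemma Nondegenerate.of_mem_children (ht : t.Nondegenerate) {s : BasedTriangle E}
    (hs : s ∈ t.children) : s.Nondegenerate := by
  rw [Nondegenerate, LinearIndependent.pair_iff] at ht ⊢
  intro x y hxy
  obtain rfl | rfl | rfl := hs <;>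
    simp only [baseChild, leftChild, rightChild, centroid] at hxy
  · have := ht (x + y / 3) (y / 3) (by rw [← hxy]; module)
    grind
  · have := ht (x / 3) (x / 3 + y) (by rw [← hxy]; module)
    grind
  · have := ht ((2 * x - y) / 3) ((2 * y - x) / 3) (by rw [← hxy]; module)
    grind

lemma Nondegenerate.pairwiseDisjoint_children (ht : t.Nondegenerate) :
    t.children.PairwiseDisjoint cell := by
  have base_left : Disjoint t.baseChild.cell t.leftChild.cell :=
    (ht.disjoint_region fun a b c h ↦ by grind).mono cell_baseChild_subset cell_leftChild_subset
  have base_right : Disjoint t.baseChild.cell t.rightChild.cell :=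
    (ht.disjoint_region fun a b c h ↦ by grind).mono cell_baseChild_subset cell_rightChild_subset
  have left_right : Disjoint t.leftChild.cell t.rightChild.cell :=
    (ht.disjoint_region fun a b c h ↦ by grind).mono cell_leftChild_subset cell_rightChild_subset
  rintro _ (rfl | rfl | rfl) _ (rfl | rfl | rfl) hne
  exacts [(hne rfl).elim, base_left, base_right, base_left.symm, (hne rfl).elim, left_right,
    base_right.symm, left_right.symm, (hne rfl).elim]

lemma Nondegenerate.centroid_notMem_cell_child (ht : t.Nondegenerate) {s : BasedTriangle E}
    (hs : s ∈ t.children) : t.centroid ∉ s.cell := by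
  have key : ∀ P : ℝ → ℝ → ℝ → Prop, (∀ a b c, P a b c → ¬ (a = b ∧ b = c)) →
      t.centroid ∉ t.region P :=
    fun P hP ↦ (ht.disjoint_region hP).notMem_of_mem_right (centroid_mem_region ⟨rfl, rfl⟩)
  obtain rfl | rfl | rfl := hs
  · exact fun h ↦ key _ (fun a b c h ↦ by grind) (cell_baseChild_subset h)
  · exact fun h ↦ key _ (fun a b c h ↦ by grind) (cell_leftChild_subset h)
  · exact fun h ↦ key _ (fun a b c h ↦ by grind) (cell_rightChild_subset h)

lemma mem_base_or_eq_centroid {s : BasedTriangle E} (hs : s ∈ t.children) (hx : x ∈ s.base) :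
    x ∈ t.base ∨ x = t.centroid := by
  obtain rfl | rfl | rfl := hs <;>
    simp only [base, baseChild, leftChild, rightChild, Sym2.mem_iff] at hx ⊢ <;> tauto

lemma exists_child_base_eq (hx : x ∈ t.base) : ∃ s ∈ t.children, s.base = s(t.centroid, x) := by
  obtain rfl | rfl := Sym2.mem_iff.1 hx
  · exact ⟨t.leftChild, by simp [children], Sym2.eq_swap⟩
  · exact ⟨t.rightChild, by simp [children], rfl⟩

lemma exists_mem_subdivide_base_eq {F : Set (BasedTriangle E)} {s : BasedTriangle E}
    (hs : s ∈ F) : ∃ r ∈ t.subdivide F, r.base = s.base := by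
  by_cases hst : s = t
  · exact ⟨t.baseChild, .inr (by simp [children]), by rw [hst]; rfl⟩
  · exact ⟨s, .inl ⟨hs, hst⟩, rfl⟩

end BasedTriangle

open BasedTriangle

/-- A family of triangles in which a partial straight-line drawing lives: its edges are bases of
the family, and the cells are the mutually disjoint rooms in which it can be continued. -/
structure IsTriangleFamily (F : Set (BasedTriangle E)) : Prop where
  nonempty : F.Nonempty
  nondegenerate : ∀ t ∈ F, t.Nondegenerate
  pairwiseDisjoint : F.PairwiseDisjoint cell
  notMem_cell : ∀ s ∈ F, ∀ t ∈ F, ∀ x ∈ s.base, x ∉ t.cell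

namespace IsTriangleFamily

variable {F : Set (BasedTriangle E)} {t : BasedTriangle E}

lemma subdivide (hF : IsTriangleFamily F) (ht : t ∈ F) : IsTriangleFamily (t.subdivide F) where
  nonempty := ⟨t.baseChild, .inr (by simp [children])⟩
  nondegenerate s hs :=
    hs.elim (fun h ↦ hF.nondegenerate s h.1) (hF.nondegenerate t ht).of_mem_children
  pairwiseDisjoint := by
    refine Set.pairwiseDisjoint_union.2
      ⟨hF.pairwiseDisjoint.subset Set.sdiff_subset,
        (hF.nondegenerate t ht).pairwiseDisjoint_children, fun s hs r hr _ ↦ ?_⟩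
    exact (hF.pairwiseDisjoint hs.1 ht hs.2).mono_right (cell_child_subset hr)
  notMem_cell := by
    have corner {r} (hr : r ∈ t.subdivide F) {x} (hx : x ∈ r.base) :
        (∃ r' ∈ F, x ∈ r'.base) ∨ x = t.centroid :=
      hr.elim (fun h ↦ .inl ⟨r, h.1, hx⟩)
        fun h ↦ (mem_base_or_eq_centroid h hx).imp_left fun h ↦ ⟨t, ht, h⟩
    rintro r hr s (hs | hs) x hx
    · obtain ⟨r', hr', hx⟩ | rfl := corner hr hx
      · exact hF.notMem_cell r' hr' s hs.1 x hx
      · exact (hF.pairwiseDisjoint hs.1 ht hs.2).notMem_of_mem_right centroid_mem_cell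
    · obtain ⟨r', hr', hx⟩ | rfl := corner hr hx
      · exact fun h ↦ hF.notMem_cell r' hr' t ht x hx (cell_child_subset hs h)
      · exact (hF.nondegenerate t ht).centroid_notMem_cell_child hs

lemma singleton (ht : t.Nondegenerate) : IsTriangleFamily {t} where
  nonempty := Set.singleton_nonempty t
  nondegenerate := by rintro _ rfl; exact ht
  pairwiseDisjoint := Set.pairwiseDisjoint_singleton t cell
  notMem_cell := by
    have key : ∀ x ∈ t.region fun a b _ ↦ a = 0 ∨ b = 0, x ∉ t.cell := fun x hx ↦
      (ht.disjoint_region fun a b c h ↦ by grind).notMem_of_mem_left hx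
    rintro _ rfl _ rfl x hx
    obtain rfl | rfl := Sym2.mem_iff.1 hx
    · exact key _ (left_mem_region (.inr rfl))
    · exact key _ (right_mem_region (.inl rfl))

end IsTriangleFamily

lemma exists_isTriangleFamily :
    ∃ F : Set (BasedTriangle (EuclideanSpace ℝ (Fin 2))), IsTriangleFamily F := by
  refine ⟨_, IsTriangleFamily.singleton
    (t := ⟨0, EuclideanSpace.single 0 1, EuclideanSpace.single 1 1⟩)
    (LinearIndependent.pair_iff.2 fun x y hxy ↦ ?_)⟩
  exact ⟨by simpa using congrArg (· 0) hxy, by simpa using congrArg (· 1) hxy⟩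

/-- `H` is built on the vertex set `S` by successively adding vertices whose neighbourhood is a
clique `N` with at most two elements. These are the chordal graphs of treewidth at most two. -/
inductive IsChordalTwoDegenerate : Set V → SimpleGraph V → Prop
  | empty : IsChordalTwoDegenerate ∅ ⊥
  | insert {S N : Set V} {H : SimpleGraph V} {v : V} (hH : IsChordalTwoDegenerate S H)
      (hv : v ∉ S) (hNS : N ⊆ S) (hN : H.IsClique N) (hcard : N.encard ≤ 2) :
      IsChordalTwoDegenerate (insert v S) (H ⊔ fromRel fun x y ↦ x = v ∧ y ∈ N)

/-- A straight-line drawing `p` of the graph `H` with vertex set `S` whose edges are bases of the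
triangle family `F`. -/
structure IsDrawing (S : Set V) (H : SimpleGraph V) (F : Set (BasedTriangle E)) (p : V → E) :
    Prop where
  isTriangleFamily : IsTriangleFamily F
  injOn : S.InjOn p
  exists_mem_base : ∀ v ∈ S, ∃ t ∈ F, p v ∈ t.base
  exists_base_eq : ∀ ⦃u w⦄, H.Adj u w → u ∈ S ∧ w ∈ S ∧ ∃ t ∈ F, t.base = s(p u, p w)

namespace IsDrawing

variable {S N : Set V} {H : SimpleGraph V} {F : Set (BasedTriangle E)} {p : V → E}
  {t : BasedTriangle E} {v : V}

lemma apply_notMem_cell (hD : IsDrawing S H F p) (hv : v ∈ S) (ht : t ∈ F) : p v ∉ t.cell := by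
  obtain ⟨s, hs, hvs⟩ := hD.exists_mem_base v hv
  exact hD.isTriangleFamily.notMem_cell s hs t ht _ hvs

lemma insert [DecidableEq V] (hD : IsDrawing S H F p) (hv : v ∉ S) (hNS : N ⊆ S) (ht : t ∈ F)
    (hN : ∀ x ∈ N, p x ∈ t.base) :
    IsDrawing (insert v S) (H ⊔ fromRel fun x y ↦ x = v ∧ y ∈ N) (t.subdivide F)
      (Function.update p v t.centroid) := by
  have update_eq {x} (hx : x ∈ S) : Function.update p v t.centroid x = p x :=
    Function.update_of_ne (ne_of_mem_of_not_mem hx hv) _ _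
  have newEdge {x} (hx : x ∈ N) : ∃ s ∈ t.subdivide F, s.base = s(t.centroid, p x) :=
    let ⟨s, hs, hbase⟩ := exists_child_base_eq (hN x hx)
    ⟨s, .inr hs, hbase⟩
  refine ⟨hD.isTriangleFamily.subdivide ht, ?_, ?_, ?_⟩
  · rw [Set.injOn_insert hv, Function.update_self]
    refine ⟨hD.injOn.congr fun x hx ↦ (update_eq hx).symm, ?_⟩
    rintro ⟨x, hx, hxt⟩
    rw [update_eq hx] at hxt
    exact hD.apply_notMem_cell hx ht (hxt ▸ centroid_mem_cell)
  · rintro x (rfl | hx)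
    · exact ⟨t.leftChild, .inr (by simp [children]), by simp [base, leftChild]⟩
    · obtain ⟨s, hs, hxs⟩ := hD.exists_mem_base x hx
      obtain ⟨r, hr, hrs⟩ := exists_mem_subdivide_base_eq (t := t) hs
      exact ⟨r, hr, by rwa [update_eq hx, hrs]⟩
  · rintro x y (hxy | ⟨-, ⟨rfl, hy⟩ | ⟨rfl, hx⟩⟩)
    · obtain ⟨hx, hy, s, hs, hbase⟩ := hD.exists_base_eq hxy
      obtain ⟨r, hr, hrs⟩ := exists_mem_subdivide_base_eq (t := t) hs
      exact ⟨.inr hx, .inr hy, r, hr, by rw [hrs, hbase, update_eq hx, update_eq hy]⟩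
    · rw [Function.update_self, update_eq (hNS hy)]
      exact ⟨.inl rfl, .inr (hNS hy), newEdge hy⟩
    · rw [Function.update_self, update_eq (hNS hx), Sym2.eq_swap]
      exact ⟨.inr (hNS hx), .inl rfl, newEdge hx⟩

lemma exists_clique_subset_base (hD : IsDrawing S H F p) (hNS : N ⊆ S) (hN : H.IsClique N)
    (hcard : N.encard ≤ 2) : ∃ t ∈ F, ∀ x ∈ N, p x ∈ t.base := by
  obtain rfl | ⟨a, ha⟩ := N.eq_empty_or_nonempty
  · obtain ⟨t, ht⟩ := hD.isTriangleFamily.nonempty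
    exact ⟨t, ht, by simp⟩
  by_cases hsub : N.Subsingleton
  · obtain ⟨t, ht, hat⟩ := hD.exists_mem_base a (hNS ha)
    exact ⟨t, ht, fun x hx ↦ hsub ha hx ▸ hat⟩
  · obtain ⟨a, b, hab, rfl⟩ : ∃ a b, a ≠ b ∧ N = {a, b} := by
      refine Set.encard_eq_two.1 (hcard.antisymm ?_)
      have := Set.one_lt_encard_iff_nontrivial.2 (Set.not_subsingleton_iff.1 hsub)
      exact Order.add_one_le_of_lt this
    obtain ⟨-, -, t, ht, hbase⟩ := hD.exists_base_eq (hN (by simp) (by simp) hab)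
    exact ⟨t, ht, by simp [hbase]⟩

end IsDrawing

lemma IsChordalTwoDegenerate.exists_isDrawing {S : Set V} {H : SimpleGraph V}
    (hH : IsChordalTwoDegenerate S H) {F₀ : Set (BasedTriangle E)} (hF₀ : IsTriangleFamily F₀) :
    ∃ F : Set (BasedTriangle E), ∃ p : V → E, IsDrawing S H F p := by
  classical
  induction hH with
  | empty => exact ⟨F₀, 0, hF₀, by simp, by simp, by simp⟩
  | insert _ hv hNS hN hcard ih =>
    obtain ⟨F, p, hD⟩ := ih
    obtain ⟨t, ht, hNt⟩ := hD.exists_clique_subset_base hNS hN hcard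
    exact ⟨_, _, hD.insert hv hNS ht hNt⟩

end Triangles

section Planarity

variable {G H : SimpleGraph V}

lemma IsPlanar.mono (hH : IsPlanar H) (hGH : G ≤ H) : IsPlanar G := by
  obtain ⟨p, c, hp, hc, hends, hvert, hdisj⟩ := hH
  have hsub : G.edgeSet ⊆ H.edgeSet := edgeSet_subset_edgeSet.2 hGH
  exact ⟨p, c, hp, fun e he ↦ hc e (hsub he), fun u w h ↦ hends u w (hGH h),
    fun e he ↦ hvert e (hsub he), fun e he f hf ↦ hdisj e (hsub he) f (hsub hf)⟩

lemma isPlanar_of_openSegment {p : V → EuclideanSpace ℝ (Fin 2)} (hp : Function.Injective p)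
    (hvert : ∀ u w, G.Adj u w → ∀ v, p v ∉ openSegment ℝ (p u) (p w))
    (hdisj : ∀ u w u' w', G.Adj u w → G.Adj u' w' → s(u, w) ≠ s(u', w') →
      Disjoint (openSegment ℝ (p u) (p w)) (openSegment ℝ (p u') (p w'))) :
    IsPlanar G := by
  let c (e : Sym2 V) : ℝ → EuclideanSpace ℝ (Fin 2) :=
    AffineMap.lineMap (p (Quot.out e).1) (p (Quot.out e).2)
  have out_eq (e : Sym2 V) : s((Quot.out e).1, (Quot.out e).2) = e := Quot.out_eq e
  have adj_out {e} (he : e ∈ G.edgeSet) : G.Adj (Quot.out e).1 (Quot.out e).2 := by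
    rwa [← mem_edgeSet, out_eq]
  have mem_openSegment (e) {s : ℝ} (hs : s ∈ Set.Ioo (0 : ℝ) 1) :
      c e s ∈ openSegment ℝ (p (Quot.out e).1) (p (Quot.out e).2) := by
    rw [openSegment_eq_image_lineMap]
    exact Set.mem_image_of_mem _ hs
  refine ⟨p, c, hp, fun e he ↦ ⟨AffineMap.lineMap_continuous.continuousOn, ?_⟩, fun u w _ ↦ ?_,
    fun e he s hs ↦ ?_, fun e he f hf hef s hs s' hs' ↦ ?_⟩
  · exact (AffineMap.lineMap_injective ℝ (hp.ne (adj_out he).ne)).injOn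
  · obtain ⟨hu, hw⟩ | ⟨hu, hw⟩ := Sym2.eq_iff.1 (out_eq s(u, w))
    · exact .inl ⟨by simp [c, hu], by simp [c, hw]⟩
    · exact .inr ⟨by simp [c, hu], by simp [c, hw]⟩
  · rintro ⟨v, hv⟩
    exact hvert _ _ (adj_out he) v (hv ▸ mem_openSegment e hs)
  · have hne : s((Quot.out e).1, (Quot.out e).2) ≠ s((Quot.out f).1, (Quot.out f).2) := by
      rwa [out_eq, out_eq]
    exact (hdisj _ _ _ _ (adj_out he) (adj_out hf) hne).ne_of_mem
      (mem_openSegment e hs) (mem_openSegment f hs')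

lemma IsDrawing.isPlanar {F : Set (BasedTriangle (EuclideanSpace ℝ (Fin 2)))}
    {p : V → EuclideanSpace ℝ (Fin 2)} (hD : IsDrawing Set.univ H F p) : IsPlanar H := by
  have hp : Function.Injective p := Set.injOn_univ.1 hD.injOn
  refine isPlanar_of_openSegment hp (fun u w h v ↦ ?_) (fun u w u' w' h h' hne ↦ ?_)
  · obtain ⟨-, -, t, ht, hbase⟩ := hD.exists_base_eq h
    exact fun hv ↦ hD.apply_notMem_cell (Set.mem_univ v) ht
      (BasedTriangle.openSegment_subset_cell hbase hv)
  · obtain ⟨-, -, t, ht, hbase⟩ := hD.exists_base_eq h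
    obtain ⟨-, -, t', ht', hbase'⟩ := hD.exists_base_eq h'
    have htt' : t ≠ t' := by
      rintro rfl
      exact hne (Sym2.map.injective hp (hbase.symm.trans hbase'))
    exact (hD.isTriangleFamily.pairwiseDisjoint ht ht' htt').mono
      (BasedTriangle.openSegment_subset_cell hbase) (BasedTriangle.openSegment_subset_cell hbase')

lemma IsChordalTwoDegenerate.isPlanar (hH : IsChordalTwoDegenerate Set.univ H) : IsPlanar H := by
  obtain ⟨F₀, hF₀⟩ := exists_isTriangleFamily
  obtain ⟨F, p, hD⟩ := hH.exists_isDrawing hF₀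
  exact hD.isPlanar

end Planarity

section InducedCycles

variable {G : SimpleGraph V} {f g : ℕ → V} {m n : ℕ}

/-- The vertices `f 0, …, f (n - 1)` form, in this cyclic order, an induced cycle of `G`. -/
structure IsInducedCycle (G : SimpleGraph V) (f : ℕ → V) (n : ℕ) : Prop where
  three_le : 3 ≤ n
  injOn : (Set.Iio n).InjOn f
  adj_iff : ∀ ⦃i j⦄, i < j → j < n → (G.Adj (f i) (f j) ↔ j = i + 1 ∨ i = 0 ∧ j + 1 = n)

/-- The vertices `f 0, …, f n` form, in this order, an induced path of `G`. -/
structure IsInducedPath (G : SimpleGraph V) (f : ℕ → V) (n : ℕ) : Prop where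
  ne : ∀ ⦃i j⦄, i < j → j ≤ n → f i ≠ f j
  adj_iff : ∀ ⦃i j⦄, i < j → j ≤ n → (G.Adj (f i) (f j) ↔ j = i + 1)

lemma injOn_of_lt_imp_ne {α β : Type*} [LinearOrder α] {s : Set α} {f : α → β}
    (h : ∀ i ∈ s, ∀ j ∈ s, i < j → f i ≠ f j) : s.InjOn f := by
  intro i hi j hj hij
  obtain hlt | heq | hlt := lt_trichotomy i j
  · exact (h i hi j hj hlt hij).elim
  · exact heq
  · exact (h j hj i hi hlt hij.symm).elim

lemma exists_walk_getVert_eq (hf : ∀ i < n, G.Adj (f i) (f (i + 1))) :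
    ∃ w : G.Walk (f 0) (f n), w.length = n ∧ ∀ i ≤ n, w.getVert i = f i := by
  induction n with
  | zero => exact ⟨.nil, rfl, fun i hi ↦ by simp [Nat.le_zero.1 hi]⟩
  | succ n ih =>
    obtain ⟨w, hlen, hw⟩ := ih fun i hi ↦ hf i (by omega)
    refine ⟨w.concat (hf n (by omega)), by simp [hlen], fun i hi ↦ ?_⟩
    rw [Walk.concat_eq_append, Walk.getVert_append]
    grind [Walk.getVert_zero, Walk.getVert_cons, Walk.getVert_nil]

lemma IsChordlessCycle.edges_eq {v : V} {c : G.Walk v v} (hc : IsChordlessCycle c) :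
    {e | e ∈ c.edges} = G.edgeSet ∩ {x | x ∈ c.support}.sym2 := by
  ext ⟨x, y⟩
  refine ⟨fun h ↦ ⟨c.edges_subset_edgeSet h, ?_⟩, fun ⟨hadj, hxy⟩ ↦ ?_⟩
  · exact Set.mk_mem_sym2_iff.2
      ⟨c.fst_mem_support_of_mem_edges h, c.snd_mem_support_of_mem_edges h⟩
  · obtain ⟨hx, hy⟩ := Set.mk_mem_sym2_iff.1 hxy
    exact hc.2 x y hx hy hadj

lemma finite_of_mem_chordlessCycleSets {S : Set (Sym2 V)} (hS : S ∈ chordlessCycleSets G) :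
    S.Finite := by
  obtain ⟨v, c, -, rfl⟩ := hS
  exact c.edges.finite_toSet

namespace IsInducedCycle

lemma adj_succ (hf : IsInducedCycle G f n) {i : ℕ} (hi : i + 1 < n) : G.Adj (f i) (f (i + 1)) :=
  (hf.adj_iff i.lt_succ_self hi).2 (.inl rfl)

lemma adj_last_zero (hf : IsInducedCycle G f (n + 1)) : G.Adj (f n) (f 0) :=
  ((hf.adj_iff (by have := hf.three_le; omega) n.lt_succ_self).2 (.inr ⟨rfl, rfl⟩)).symm

lemma adj_iff' (hf : IsInducedCycle G f n) {i j : ℕ} (hi : i < n) (hj : j < n) :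
    G.Adj (f i) (f j) ↔
      j = i + 1 ∨ i = j + 1 ∨ i = 0 ∧ j + 1 = n ∨ j = 0 ∧ i + 1 = n := by
  have := hf.three_le
  obtain hij | rfl | hij := lt_trichotomy i j
  · grind [hf.adj_iff hij hj]
  · simp only [SimpleGraph.irrefl, false_iff]
    omega
  · grind [hf.adj_iff hij hi, G.adj_comm (f i)]

lemma exists_isChordlessCycle (hf : IsInducedCycle G f n) :
    ∃ (v : V) (c : G.Walk v v), IsChordlessCycle c ∧ {x | x ∈ c.support} = f '' Set.Iio n := by
  obtain ⟨k, rfl⟩ : ∃ k, n = k + 1 := ⟨n - 1, by have := hf.three_le; omega⟩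
  have hk : 2 ≤ k := Nat.le_of_lt_succ hf.three_le
  obtain ⟨w, hlen, hw⟩ := exists_walk_getVert_eq (f := f) (n := k) fun i hi ↦
    hf.adj_succ (by omega)
  have hpath : w.IsPath := by
    refine (Walk.IsPath.getVert_injOn_iff w).1 fun i hi j hj hij ↦ ?_
    rw [Set.mem_ofPred_eq, hlen] at hi hj
    rw [hw i hi, hw j hj] at hij
    exact hf.injOn (Nat.lt_succ_of_le hi) (Nat.lt_succ_of_le hj) hij
  have mem_edges {i j} (hij : i < j) (hj : j < k + 1) (h : G.Adj (f i) (f j)) :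
      s(f i, f j) ∈ (Walk.cons hf.adj_last_zero w).edges := by
    rw [Walk.edges_cons, List.mem_cons, Walk.mk_mem_edges_iff_exists]
    obtain rfl | ⟨rfl, hj'⟩ := (hf.adj_iff hij hj).1 h
    · exact .inr ⟨i, by omega, by rw [hw i (by omega), hw (i + 1) (by omega)]⟩
    · obtain rfl : j = k := by omega
      exact .inl Sym2.eq_swap
  have hsupp : {x | x ∈ (Walk.cons hf.adj_last_zero w).support} = f '' Set.Iio (k + 1) := by
    ext x
    simp only [Walk.support_cons, List.mem_cons, Walk.mem_support_iff_exists_getVert, hlen]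
    grind
  refine ⟨f k, .cons hf.adj_last_zero w, ⟨?_, fun x y hx hy hxy ↦ ?_⟩, hsupp⟩
  · refine (Walk.cons_isCycle_iff _ _).2 ⟨hpath, fun h ↦ ?_⟩
    have := hpath.length_eq_one_of_mem_edges (Sym2.eq_swap ▸ h)
    omega
  · obtain ⟨i, hi, rfl⟩ := hsupp.subset hx
    obtain ⟨j, hj, rfl⟩ := hsupp.subset hy
    obtain hij | rfl | hij := lt_trichotomy i j
    · exact mem_edges hij hj hxy
    · exact (hxy.ne rfl).elim
    · rw [Sym2.eq_swap]
      exact mem_edges hij hi hxy.symm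

lemma edgeSet_inter_mem_chordlessCycleSets (hf : IsInducedCycle G f n) :
    G.edgeSet ∩ (f '' Set.Iio n).sym2 ∈ chordlessCycleSets G := by
  obtain ⟨v, c, hc, hsupp⟩ := hf.exists_isChordlessCycle
  exact ⟨v, c, hc, by rw [hc.edges_eq, hsupp]⟩

lemma exists_adj (hf : IsInducedCycle G f n) {x : V} (hx : x ∈ f '' Set.Iio n) :
    ∃ y ∈ f '' Set.Iio n, G.Adj x y := by
  have := hf.three_le
  obtain ⟨i, hi, rfl⟩ := hx
  rw [Set.mem_Iio] at hi
  by_cases hi' : i + 1 < n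
  · exact ⟨_, Set.mem_image_of_mem f hi', hf.adj_succ hi'⟩
  · obtain rfl : n = i + 1 := by omega
    exact ⟨_, Set.mem_image_of_mem f (Set.mem_Iio.2 (by omega)), hf.adj_last_zero⟩

lemma subset_of_common_path (hci : ChordlessCyclesShareAtMostOneEdge G)
    (hf : IsInducedCycle G f n) (hg : IsInducedCycle G g m) {x y z : V} (hxy : x ≠ y)
    (hxz : G.Adj x z) (hyz : G.Adj y z) (hxf : x ∈ f '' Set.Iio n) (hyf : y ∈ f '' Set.Iio n)
    (hzf : z ∈ f '' Set.Iio n) (hxg : x ∈ g '' Set.Iio m) (hyg : y ∈ g '' Set.Iio m)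
    (hzg : z ∈ g '' Set.Iio m) : g '' Set.Iio m ⊆ f '' Set.Iio n := by
  have hfmem := hf.edgeSet_inter_mem_chordlessCycleSets
  have hgmem := hg.edgeSet_inter_mem_chordlessCycleSets
  have heq : G.edgeSet ∩ (f '' Set.Iio n).sym2 = G.edgeSet ∩ (g '' Set.Iio m).sym2 := by
    by_contra hne
    have hfin := (finite_of_mem_chordlessCycleSets hfmem).inter_of_left
      (G.edgeSet ∩ (g '' Set.Iio m).sym2)
    have huniq := (Set.ncard_le_one hfin).1 (hci _ hfmem _ hgmem hne)
      s(x, z) (by simp_all) s(y, z) (by simp_all)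
    exact hxy (Sym2.congr_left.1 huniq)
  intro u hu
  obtain ⟨v, hv, huv⟩ := hg.exists_adj hu
  have huvf := heq.superset ⟨huv, Set.mk_mem_sym2_iff.2 ⟨hu, hv⟩⟩
  exact (Set.mk_mem_sym2_iff.1 huvf.2).1

lemma exists_rotate (hf : IsInducedCycle G f n) {r : ℕ} (hr : r < n) :
    ∃ g, IsInducedCycle G g n ∧ g '' Set.Iio n = f '' Set.Iio n ∧
      (∀ i, i + r < n → g i = f (i + r)) ∧ ∀ i < n, n ≤ i + r → g i = f (i + r - n) := by
  let ρ (i : ℕ) : ℕ := if i + r < n then i + r else i + r - n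
  have hρ {i} (hi : i < n) : ρ i < n := by grind
  have ρ_lt {i} (hi : i + r < n) : ρ i = i + r := if_pos hi
  have ρ_ge {i} (hi : n ≤ i + r) : ρ i = i + r - n := if_neg hi.not_gt
  refine ⟨f ∘ ρ, ⟨hf.three_le, fun i hi j hj hij ↦ ?_, fun i j hij hj ↦ ?_⟩, ?_,
    fun i hi ↦ congrArg f (ρ_lt hi), fun i _ hi ↦ congrArg f (ρ_ge hi)⟩
  · have heq := hf.injOn (hρ hi) (hρ hj) hij
    simp only [ρ, Set.mem_Iio] at heq hi hj
    split_ifs at heq <;> omega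
  · have := hf.three_le
    rw [Function.comp_apply, Function.comp_apply, hf.adj_iff' (hρ (hij.trans hj)) (hρ hj)]
    simp only [ρ]
    split_ifs <;> omega
  · rw [Set.image_comp]
    refine congrArg (f '' ·)
      (Set.Subset.antisymm (Set.image_subset_iff.2 fun i ↦ hρ) fun i (hi : i < n) ↦ ?_)
    by_cases hri : r ≤ i
    · exact ⟨i - r, Set.mem_Iio.2 (by omega), by rw [ρ_lt] <;> omega⟩
    · exact ⟨i + n - r, Set.mem_Iio.2 (by omega), by rw [ρ_ge] <;> omega⟩

lemma isInducedPath (hf : IsInducedCycle G f n) (hmn : m + 1 < n) : IsInducedPath G f m where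
  ne i j hij hj := hf.injOn.ne (Set.mem_Iio.2 (by omega)) (Set.mem_Iio.2 (by omega)) hij.ne
  adj_iff i j hij hj := by
    rw [hf.adj_iff hij (by omega)]
    omega

end IsInducedCycle

lemma IsInducedPath.glue (hf : IsInducedPath G f m) (hg : IsInducedPath G g n) (hm : 2 ≤ m)
    (hn : 2 ≤ n) (hg_zero : g 0 = f m) (hg_last : g n = f 0)
    (hne : ∀ l i, l ≤ m → 0 < i → i < n → f l ≠ g i)
    (hadj : ∀ l i, 0 < l → l < m → 0 < i → i < n → ¬ G.Adj (f l) (g i)) :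
    IsInducedCycle G (fun k ↦ if k ≤ m then f k else g (k - m)) (m + n) := by
  refine ⟨by omega, injOn_of_lt_imp_ne fun i _ j hj hij ↦ ?_, fun i j hij hj ↦ ?_⟩
  · rw [Set.mem_Iio] at hj
    split_ifs with him hjm hjm
    · exact hf.ne hij hjm
    · exact hne i _ him (by omega) (by omega)
    · omega
    · exact hg.ne (by omega) (by omega)
  obtain hjm | hjm := le_or_gt j m
  · rw [if_pos hjm, if_pos (hij.le.trans hjm), hf.adj_iff hij hjm]
    omega
  rw [if_neg hjm.not_ge]
  obtain him | him := lt_or_ge m i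
  · rw [if_neg him.not_ge, hg.adj_iff (by omega) (by omega)]
    omega
  rw [if_pos him]
  obtain rfl | hi := i.eq_zero_or_pos
  · rw [← hg_last, G.adj_comm, hg.adj_iff (by omega) le_rfl]
    omega
  obtain rfl | him := him.eq_or_lt
  · rw [← hg_zero, hg.adj_iff (by omega) (by omega)]
    omega
  · exact ⟨fun h ↦ (hadj i _ hi him (by omega) (by omega) h).elim, by omega⟩

lemma TriangleFree.not_adj (htf : TriangleFree G) {x y z : V} (hxy : G.Adj x y)
    (hyz : G.Adj y z) : ¬ G.Adj x z := by
  intro hxz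
  refine htf z (.cons hxz.symm (.cons hxy (.cons hyz .nil))) ?_ rfl
  rw [Walk.cons_isCycle_iff]
  simp only [Walk.isPath_def, Walk.support_cons, Walk.support_nil, Walk.edges_cons,
    Walk.edges_nil]
  grind [hxy.ne, hyz.ne, hxz.ne]

end InducedCycles

section Ears

variable {G : SimpleGraph V} {S T : Set V} {a b c d : V} {w : G.Walk a b} {i j : ℕ}

/-- No vertex of `w` other than its two ends lies in `S`. -/
def InteriorAvoids (w : G.Walk a b) (S : Set V) : Prop :=
  ∀ ⦃i⦄, 0 < i → i < w.length → w.getVert i ∉ S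

/-- An ear of `S`: a walk with at least one interior vertex, which joins two different vertices
of `S` and otherwise avoids `S`. -/
structure IsEar (S : Set V) (w : G.Walk a b) : Prop where
  start_mem : a ∈ S
  end_mem : b ∈ S
  ne : a ≠ b
  two_le_length : 2 ≤ w.length
  interiorAvoids : InteriorAvoids w S

/-- An ear of `S` of minimal length among the ears with the same ends. -/
structure IsShortestEar (S : Set V) (w : G.Walk a b) : Prop extends IsEar S w where
  length_le : ∀ w' : G.Walk a b, IsEar S w' → w.length ≤ w'.length

lemma interiorAvoids_of_length_le_one (hw : w.length ≤ 1) : InteriorAvoids w S :=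
  fun _ hpos hlt ↦ by omega

namespace InteriorAvoids

lemma mono (hw : InteriorAvoids w T) (hST : S ⊆ T) : InteriorAvoids w S :=
  fun _ hpos hlt hmem ↦ hw hpos hlt (hST hmem)

lemma reverse (hw : InteriorAvoids w S) : InteriorAvoids w.reverse S := by
  intro i hpos hlt
  rw [Walk.length_reverse] at hlt
  rw [Walk.getVert_reverse]
  exact hw (by omega) (by omega)

lemma cons (hw : InteriorAvoids w S) (ha : a ∉ S) (hca : G.Adj c a) :
    InteriorAvoids (.cons hca w) S := by
  intro i hpos hlt
  obtain ⟨i, rfl⟩ := Nat.exists_eq_add_of_lt hpos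
  rw [Walk.length_cons] at hlt
  rw [zero_add, Walk.getVert_cons_succ]
  obtain rfl | hi := i.eq_zero_or_pos
  · rwa [Walk.getVert_zero]
  · exact hw hi (by omega)

lemma append (hw : InteriorAvoids w S) {w' : G.Walk b c} (hw' : InteriorAvoids w' S)
    (hb : b ∉ S) : InteriorAvoids (w.append w') S := by
  intro i hpos hlt
  rw [Walk.length_append] at hlt
  rw [Walk.getVert_append]
  split_ifs with hi
  · exact hw hpos hi
  · obtain hi | hi := Nat.eq_zero_or_pos (i - w.length)
    · rwa [hi, Walk.getVert_zero]
    · exact hw' hi (by omega)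

lemma take (hw : InteriorAvoids w S) (i : ℕ) : InteriorAvoids (w.take i) S := by
  intro k hpos hlt
  rw [Walk.take_length] at hlt
  rw [Walk.take_getVert]
  exact hw (by omega) (by omega)

lemma drop (hw : InteriorAvoids w S) (i : ℕ) : InteriorAvoids (w.drop i) S := by
  intro k hpos hlt
  rw [Walk.drop_length] at hlt
  rw [Walk.drop_getVert]
  exact hw (by omega) (by omega)

lemma exists_detour (hw : InteriorAvoids w S) (hi : 0 < i) (hij : i ≤ j) (hj : j < w.length)
    (hc : G.Adj c (w.getVert i)) (hd : G.Adj (w.getVert j) d) :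
    ∃ w' : G.Walk c d, w'.length = j - i + 2 ∧ InteriorAvoids w' S := by
  have hstart : (w.take j).getVert i = w.getVert i := by
    rw [Walk.take_getVert, min_eq_right hij]
  let u := (w.take j).drop i
  have hu : InteriorAvoids u S := (hw.take j).drop i
  have hlen : u.length = j - i := by
    rw [Walk.drop_length, Walk.take_length, min_eq_left hj.le]
  refine ⟨.cons (hstart ▸ hc) (u.append (.cons hd .nil)), by simp [hlen], ?_⟩
  refine (hu.append (interiorAvoids_of_length_le_one le_rfl) (hw (hi.trans_le hij) hj)).cons ?_ _
  rw [hstart]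
  exact hw hi (hij.trans_lt hj)

end InteriorAvoids

lemma IsEar.reverse (hw : IsEar S w) : IsEar S w.reverse :=
  ⟨hw.end_mem, hw.start_mem, hw.ne.symm, by simpa using hw.two_le_length,
    hw.interiorAvoids.reverse⟩

lemma InteriorAvoids.isEar_of_not_adj (hw : InteriorAvoids w S) (ha : a ∈ S) (hb : b ∈ S)
    (hab : a ≠ b) (hadj : ¬ G.Adj a b) : IsEar S w := by
  refine ⟨ha, hb, hab, ?_, hw⟩
  by_contra! hlt
  obtain hlen | hlen : w.length = 0 ∨ w.length = 1 := by omega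
  · exact hab (Walk.eq_of_length_eq_zero hlen)
  · exact hadj (Walk.adj_of_length_eq_one hlen)

lemma IsEar.exists_isShortestEar (hw : IsEar S w) : ∃ u : G.Walk a b, IsShortestEar S u := by
  obtain ⟨u, hu, hmin⟩ := exists_minimalFor_of_wellFoundedLT
    (fun u : G.Walk a b ↦ IsEar S u) Walk.length ⟨w, hw⟩
  exact ⟨u, hu, fun u' hu' ↦ (le_total _ _).elim id (hmin hu')⟩

namespace IsShortestEar

-- A chord of the ear would provide a shortcut.
lemma not_adj (hw : IsShortestEar S w) (hij : i + 1 < j) (hj : j ≤ w.length)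
    (hlt : j - i < w.length) : ¬ G.Adj (w.getVert i) (w.getVert j) := by
  intro hadj
  let u := (w.take i).append (.cons hadj (w.drop j))
  have hlen : u.length = i + 1 + (w.length - j) := by
    simp only [u, Walk.length_append, Walk.take_length, Walk.length_cons, Walk.drop_length]
    omega
  have hu : InteriorAvoids u S := by
    intro k hpos hlt
    rw [Walk.getVert_append, Walk.take_length, Walk.take_getVert]
    split_ifs with hk
    · exact hw.interiorAvoids (by omega) (by omega)
    · obtain hk' | hk' := Nat.eq_zero_or_pos (k - min i w.length)
      · rw [hk', Walk.getVert_zero]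
        exact hw.interiorAvoids (by omega) (by omega)
      · rw [Walk.getVert_cons _ _ hk'.ne', Walk.drop_getVert]
        exact hw.interiorAvoids (by omega) (by omega)
  have := hw.length_le u ⟨hw.start_mem, hw.end_mem, hw.ne, by omega, hu⟩
  omega

lemma getVert_ne (hw : IsShortestEar S w) (hij : i < j) (hj : j ≤ w.length) :
    w.getVert i ≠ w.getVert j := by
  intro heq
  obtain rfl | hi := i.eq_zero_or_pos
  · rw [Walk.getVert_zero] at heq
    obtain rfl | hj := hj.eq_or_lt
    · exact hw.ne (heq.trans w.getVert_length)
    · exact hw.interiorAvoids hij hj (heq ▸ hw.start_mem)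
  · obtain rfl | hj := hj.eq_or_lt
    · exact hw.interiorAvoids hi hij (heq ▸ w.getVert_length.symm ▸ hw.end_mem)
    · exact hw.not_adj (by omega) hj (by omega) (heq ▸ w.adj_getVert_succ hj)

lemma adj_iff (hw : IsShortestEar S w) (hij : i < j) (hj : j ≤ w.length)
    (hlt : j - i < w.length) : G.Adj (w.getVert i) (w.getVert j) ↔ j = i + 1 := by
  refine ⟨fun hadj ↦ ?_, fun h ↦ h ▸ w.adj_getVert_succ (by omega)⟩
  by_contra hne
  exact hw.not_adj (by omega) hj hlt hadj

lemma isInducedPath (hw : IsShortestEar S w) (hab : ¬ G.Adj a b) :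
    IsInducedPath G w.getVert w.length where
  ne _ _ hij hj := hw.getVert_ne hij hj
  adj_iff i j hij hj := by
    by_cases hlt : j - i < w.length
    · exact hw.adj_iff hij hj hlt
    · have := hw.two_le_length
      obtain ⟨rfl, rfl⟩ : i = 0 ∧ j = w.length := by omega
      rw [Walk.getVert_zero, Walk.getVert_length]
      exact ⟨fun h ↦ (hab h).elim, by omega⟩

lemma isInducedCycle (hw : IsShortestEar S w) (hab : G.Adj a b) :
    IsInducedCycle G w.getVert (w.length + 1) where
  three_le := Nat.succ_le_succ hw.two_le_length
  injOn := injOn_of_lt_imp_ne fun _ _ _ hj hij ↦ hw.getVert_ne hij (Nat.le_of_lt_succ hj)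
  adj_iff i j hij hj := by
    by_cases hlt : j - i < w.length
    · rw [hw.adj_iff hij (Nat.le_of_lt_succ hj) hlt]
      omega
    · obtain ⟨rfl, rfl⟩ : i = 0 ∧ j = w.length := by omega
      simpa using hab

end IsShortestEar

end Ears

section Attachments

variable {G : SimpleGraph V} {f : ℕ → V} {m n : ℕ} {S : Set V} {a b : V} {w : G.Walk a b}

/-- Any two vertices of `S` that are joined by an ear of `S` are adjacent. Thus every component of
the complement of `S` has its neighbours in `S` pairwise adjacent. -/
def HasCliqueAttachments (G : SimpleGraph V) (S : Set V) : Prop :=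
  ∀ ⦃a b⦄ (w : G.Walk a b), IsEar S w → G.Adj a b

/-- An ear of `S` with nonadjacent ends, of minimal length among all such ears of `S`. -/
structure IsShortestJump (S : Set V) (w : G.Walk a b) : Prop extends IsEar S w where
  not_adj : ¬ G.Adj a b
  length_le : ∀ ⦃c d⦄ (u : G.Walk c d), IsEar S u → ¬ G.Adj c d → w.length ≤ u.length

-- Otherwise the arc `f 0, …, f m` and the ear close up to a second induced cycle, which shares the
-- edges `f 0 f 1` and `f 1 f 2` with the first one.
lemma IsShortestEar.exists_adj_arc (hci : ChordlessCyclesShareAtMostOneEdge G)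
    (hf : IsInducedCycle G f n) (hw : IsShortestEar (f '' Set.Iio n) w) (hab : ¬ G.Adj a b)
    (hm : m < n) (ha : f m = a) (hb : f 0 = b) :
    ∃ l i, 0 < l ∧ l < m ∧ 0 < i ∧ i < w.length ∧ G.Adj (f l) (w.getVert i) := by
  by_contra! hno
  have hlen := hw.two_le_length
  have hn := hf.three_le
  obtain ⟨hm2, hmn⟩ : 2 ≤ m ∧ m + 1 < n := by
    have hm0 : m ≠ 0 := by rintro rfl; exact hw.ne (ha.symm.trans hb)
    have := mt (hf.adj_iff' hm (by omega)).2 (ha ▸ hb ▸ hab)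
    omega
  have hg := (hf.isInducedPath hmn).glue (hw.isInducedPath hab) hm2 hlen
    (w.getVert_zero.trans ha.symm) (w.getVert_length.trans hb.symm)
    (fun l i hl hi hi' h ↦ hw.interiorAvoids hi hi' (h ▸ Set.mem_image_of_mem f (by grind)))
    hno
  have common {k} (hk : k ≤ m) : f k ∈ f '' Set.Iio n ∧
      f k ∈ (fun k ↦ if k ≤ m then f k else w.getVert (k - m)) '' Set.Iio (m + w.length) :=
    ⟨⟨k, Set.mem_Iio.2 (by omega), rfl⟩, k, Set.mem_Iio.2 (by omega), if_pos hk⟩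
  have hsub := hf.subset_of_common_path hci hg (x := f 0) (y := f 2) (z := f 1)
    (hf.injOn.ne (Set.mem_Iio.2 (by omega)) (Set.mem_Iio.2 (by omega)) (by omega))
    (hf.adj_succ (by omega)) (hf.adj_succ (by omega)).symm (common (by omega)).1
    (common (by omega)).1 (common (by omega)).1 (common (by omega)).2 (common (by omega)).2
    (common (by omega)).2
  exact hw.interiorAvoids one_pos (by omega) (hsub ⟨m + 1, Set.mem_Iio.2 (by omega), by simp⟩)

lemma isShortestEar_of_length_eq_two (hw : IsEar S w) (hlen : w.length = 2) :
    IsShortestEar S w :=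
  ⟨hw, fun _ hu ↦ hlen.trans_le hu.two_le_length⟩

lemma IsInducedCycle.exists_rotate_zero (hf : IsInducedCycle G f n) {x : V}
    (hx : x ∈ f '' Set.Iio n) :
    ∃ g, IsInducedCycle G g n ∧ g '' Set.Iio n = f '' Set.Iio n ∧ g 0 = x := by
  obtain ⟨r, hr, rfl⟩ := hx
  obtain ⟨g, hg, himage, hshift, -⟩ := hf.exists_rotate hr
  exact ⟨g, hg, himage, by simpa using hshift 0 (by simpa using hr)⟩

lemma IsInducedCycle.eq_of_adj_of_adj (htf : TriangleFree G)
    (hci : ChordlessCyclesShareAtMostOneEdge G) (hf : IsInducedCycle G f n) {x y z : V}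
    (hx : x ∉ f '' Set.Iio n) (hy : y ∈ f '' Set.Iio n) (hz : z ∈ f '' Set.Iio n)
    (hxy : G.Adj x y) (hxz : G.Adj x z) : y = z := by
  classical
  by_contra hyz
  obtain ⟨g, hg, himage, rfl⟩ := hf.exists_rotate_zero hy
  rw [← himage] at hx hy hz
  obtain ⟨k, hk, rfl⟩ := hz
  have hex : ∃ m, 0 < m ∧ G.Adj x (g m) :=
    ⟨k, Nat.pos_of_ne_zero (by rintro rfl; exact hyz rfl), hxz⟩
  obtain ⟨hm, hxm⟩ := Nat.find_spec hex
  have hmn : Nat.find hex < n :=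
    (Nat.find_min' hex ⟨Nat.pos_of_ne_zero (by rintro rfl; exact hyz rfl), hxz⟩).trans_lt hk
  let w : G.Walk (g (Nat.find hex)) (g 0) := .cons hxm.symm (.cons hxy .nil)
  have hw : IsEar (g '' Set.Iio n) w :=
    ⟨⟨_, hmn, rfl⟩, hy, hg.injOn.ne hmn (hm.trans hmn) hm.ne', le_rfl,
      (interiorAvoids_of_length_le_one le_rfl).cons hx _⟩
  obtain ⟨l, i, hl, hlm, hi, hi', hadj⟩ := (isShortestEar_of_length_eq_two hw rfl).exists_adj_arc
    hci hg (htf.not_adj hxm.symm hxy) hmn rfl rfl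
  obtain rfl : i = 1 := le_antisymm (Nat.le_of_lt_succ hi') hi
  exact Nat.find_min hex hlm ⟨hl, hadj.symm⟩

namespace IsShortestJump

variable {c d : V} {i j : ℕ}

lemma isShortestEar (hw : IsShortestJump S w) : IsShortestEar S w :=
  ⟨hw.toIsEar, fun u hu ↦ hw.length_le u hu hw.not_adj⟩

lemma reverse (hw : IsShortestJump S w) : IsShortestJump S w.reverse where
  toIsEar := hw.toIsEar.reverse
  not_adj h := hw.not_adj h.symm
  length_le _ _ u hu hcd := by simpa using hw.length_le u hu hcd

lemma length_le_of_adj_of_adj (hw : IsShortestJump S w) (hc : c ∈ S) (hd : d ∈ S) (hcd : c ≠ d)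
    (hnadj : ¬ G.Adj c d) (hi : 0 < i) (hij : i ≤ j) (hj : j < w.length)
    (hci : G.Adj c (w.getVert i)) (hjd : G.Adj (w.getVert j) d) : w.length ≤ j - i + 2 := by
  obtain ⟨u, hlen, hu⟩ := hw.interiorAvoids.exists_detour hi hij hj hci hjd
  exact (hw.length_le u (hu.isEar_of_not_adj hc hd hcd hnadj) hnadj).trans_eq hlen

lemma adj_end_of_adj (hS : ∀ x ∉ S, ∀ y ∈ S, ∀ z ∈ S, G.Adj x y → G.Adj x z → y = z)
    (hw : IsShortestJump S w) (hc : c ∈ S) (hca : c ≠ a) (hcb : c ≠ b) (hi : 0 < i)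
    (hi' : i < w.length) (hadj : G.Adj c (w.getVert i)) : 1 < i ∧ G.Adj c b := by
  have hi1 : 1 < i := by
    by_contra! hle
    obtain rfl : i = 1 := by omega
    have ha : G.Adj (w.getVert 1) a := by simpa using (w.adj_getVert_succ (i := 0) (by omega)).symm
    exact hca (hS _ (hw.interiorAvoids hi hi') _ hc _ hw.start_mem hadj.symm ha)
  refine ⟨hi1, ?_⟩
  by_contra hnadj
  have hb : G.Adj (w.getVert (w.length - 1)) b := by
    have := w.adj_getVert_succ (i := w.length - 1) (by omega)
    rwa [Nat.sub_add_cancel (by omega), Walk.getVert_length] at this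
  have := hw.length_le_of_adj_of_adj hc hw.end_mem hcb hnadj hi (by omega) (by omega) hadj hb
  omega

end IsShortestJump

-- If the jump is attached at an interior vertex `f l` of the arc, then `f l` is adjacent to both
-- ends of the jump.
lemma IsShortestJump.exists_adj_arc (htf : TriangleFree G)
    (hci : ChordlessCyclesShareAtMostOneEdge G) (hf : IsInducedCycle G f n)
    (hw : IsShortestJump (f '' Set.Iio n) w) (hm : m < n) (ha : f m = a) (hb : f 0 = b) :
    m = 2 ∧ ∃ i, 1 < i ∧ i + 1 < w.length ∧ G.Adj (f 1) (w.getVert i) := by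
  obtain ⟨l, i, hl, hlm, hi, hi', hadj⟩ :=
    hw.isShortestEar.exists_adj_arc hci hf hw.not_adj hm ha hb
  have hS : ∀ x ∉ f '' Set.Iio n, ∀ y ∈ f '' Set.Iio n, ∀ z ∈ f '' Set.Iio n,
      G.Adj x y → G.Adj x z → y = z :=
    fun x hx y hy z hz ↦ hf.eq_of_adj_of_adj htf hci hx hy hz
  have hln : l < n := hlm.trans hm
  have hlS : f l ∈ f '' Set.Iio n := Set.mem_image_of_mem f hln
  have hla : f l ≠ a := ha ▸ hf.injOn.ne hln hm hlm.ne
  have hlb : f l ≠ b := hb ▸ hf.injOn.ne hln (hl.trans hln) hl.ne'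
  obtain ⟨hi1, hadjb⟩ := hw.adj_end_of_adj hS hlS hla hlb hi hi' hadj
  obtain ⟨hi2, hadja⟩ := hw.reverse.adj_end_of_adj hS hlS hlb hla
    (i := w.length - i) (by omega) (by simpa using by omega)
    (by rwa [Walk.getVert_reverse, Nat.sub_sub_self hi'.le])
  rw [← hb, hf.adj_iff' hln (by omega)] at hadjb
  rw [← ha, hf.adj_iff' hln hm] at hadja
  obtain rfl : l = 1 := by omega
  exact ⟨by omega, i, hi1, by omega, hadj⟩

lemma IsInducedCycle.not_isShortestJump (htf : TriangleFree G)
    (hci : ChordlessCyclesShareAtMostOneEdge G) (hf : IsInducedCycle G f n) :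
    ¬ IsShortestJump (f '' Set.Iio n) w := by
  intro hw
  obtain ⟨f, hf, himage, hb⟩ := hf.exists_rotate_zero hw.end_mem
  rw [← himage] at hw
  obtain ⟨m, hm, ha⟩ := hw.start_mem
  rw [Set.mem_Iio] at hm
  obtain ⟨rfl, i, hi, hi', hadj⟩ := hw.exists_adj_arc htf hci hf hm ha hb
  obtain ⟨g, hg, hgimage, hshift, hwrap⟩ := hf.exists_rotate hm
  have hgb : g (n - 2) = b := by rw [hwrap _ (by omega) (by omega), ← hb]; congr 1; omega
  have hga : g 0 = a := by rw [hshift 0 (by omega), ← ha]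
  obtain ⟨hn, j, hj, hj', hadj'⟩ := IsShortestJump.exists_adj_arc htf hci hg
    (hgimage ▸ hw.reverse) (by omega) hgb hga
  obtain rfl : n = 4 := by omega
  rw [hshift 1 (by omega), Walk.getVert_reverse] at hadj'
  rw [Walk.length_reverse] at hj'
  have hne : f 1 ≠ f 3 := hf.injOn.ne (by simp) (by simp) (by omega)
  have hnadj : ¬ G.Adj (f 1) (f 3) := by simp [hf.adj_iff (i := 1) (j := 3)]
  have h1 : f 1 ∈ f '' Set.Iio 4 := ⟨1, by simp, rfl⟩
  have h3 : f 3 ∈ f '' Set.Iio 4 := ⟨3, by simp, rfl⟩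
  obtain hij | hij := le_total i (w.length - j)
  · have := hw.length_le_of_adj_of_adj h1 h3 hne hnadj (by omega) hij (by omega) hadj hadj'.symm
    omega
  · have := hw.length_le_of_adj_of_adj h3 h1 hne.symm (fun h ↦ hnadj h.symm) (by omega) hij
      (by omega) hadj' hadj.symm
    omega

lemma IsEar.exists_isShortestJump (hw : IsEar S w) (hab : ¬ G.Adj a b) :
    ∃ (c d : V) (u : G.Walk c d), IsShortestJump S u := by
  obtain ⟨⟨c, d, u⟩, ⟨hu, hcd⟩, hmin⟩ := exists_minimalFor_of_wellFoundedLT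
    (fun u : Σ c d, G.Walk c d ↦ IsEar S u.2.2 ∧ ¬ G.Adj u.1 u.2.1) (fun u ↦ u.2.2.length)
    ⟨⟨a, b, w⟩, hw, hab⟩
  exact ⟨c, d, u, hu, hcd, fun c' d' u' hu' hcd' ↦
    (le_total _ _).elim id (hmin (j := ⟨c', d', u'⟩) ⟨hu', hcd'⟩)⟩

lemma IsInducedCycle.hasCliqueAttachments (htf : TriangleFree G)
    (hci : ChordlessCyclesShareAtMostOneEdge G) (hf : IsInducedCycle G f n) :
    HasCliqueAttachments G (f '' Set.Iio n) := by
  intro a b w hw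
  by_contra hab
  obtain ⟨c, d, u, hu⟩ := hw.exists_isShortestJump hab
  exact hf.not_isShortestJump htf hci hu

end Attachments

section Growth

variable {G H : SimpleGraph V} {S T N : Set V} {a b v x y : V} {w : G.Walk a b}

/-- `H` is a chordal 2-degenerate graph on `S` that contains all edges of `G` inside `S`. -/
structure IsChordalCompletion (G : SimpleGraph V) (S : Set V) (H : SimpleGraph V) : Prop where
  isChordalTwoDegenerate : IsChordalTwoDegenerate S H
  adj : ∀ ⦃x⦄, x ∈ S → ∀ ⦃y⦄, y ∈ S → G.Adj x y → H.Adj x y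

lemma IsChordalCompletion.insert_vertex (hH : IsChordalCompletion G S H) (hv : v ∉ S) (hNS : N ⊆ S)
    (hN : H.IsClique N) (hcard : N.encard ≤ 2) (hadj : ∀ x ∈ S, G.Adj v x → x ∈ N) :
    IsChordalCompletion G (insert v S) (H ⊔ fromRel fun x y ↦ x = v ∧ y ∈ N) where
  isChordalTwoDegenerate := hH.isChordalTwoDegenerate.insert hv hNS hN hcard
  adj := by
    have adj_new {x} (hx : x ∈ S) (hvx : G.Adj v x) :
        (fromRel fun x y ↦ x = v ∧ y ∈ N).Adj v x :=
      (fromRel_adj _ _ _).2 ⟨hvx.ne, .inl ⟨rfl, hadj x hx hvx⟩⟩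
    rintro x (rfl | hx) y (rfl | hy) hxy
    · exact (hxy.ne rfl).elim
    · exact .inr (adj_new hy hxy)
    · exact .inr (adj_new hx hxy.symm).symm
    · exact .inl (hH.adj hx hy hxy)

lemma HasCliqueAttachments.of_subset (hS : HasCliqueAttachments G S) (hST : S ⊆ T)
    (hT : ∀ a ∈ T \ S, ∀ b, ∀ w : G.Walk a b, IsEar T w → G.Adj a b) :
    HasCliqueAttachments G T := by
  intro a b w hw
  by_cases ha : a ∈ S
  · by_cases hb : b ∈ S
    · exact hS w ⟨ha, hb, hw.ne, hw.two_le_length, hw.interiorAvoids.mono hST⟩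
    · exact (hT b ⟨hw.end_mem, hb⟩ a w.reverse hw.reverse).symm
  · exact hT a ⟨hw.start_mem, ha⟩ b w hw

lemma subsingleton_neighbors_of_not_isEar
    (hS : ∀ ⦃a b⦄ (w : G.Walk a b), ¬ IsEar S w) (hv : v ∉ S) :
    {x ∈ S | G.Adj v x}.Subsingleton := by
  rintro x ⟨hx, hvx⟩ y ⟨hy, hvy⟩
  by_contra hxy
  refine hS (.cons hvx.symm (.cons hvy .nil)) ⟨hx, hy, hxy, le_rfl, ?_⟩
  exact (interiorAvoids_of_length_le_one le_rfl).cons hv _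

lemma hasCliqueAttachments_insert_of_adj
    (hS : ∀ ⦃a b⦄ (w : G.Walk a b), ¬ IsEar S w) (hv : v ∉ S) (hx : x ∈ S)
    (hxv : G.Adj x v) :
    HasCliqueAttachments G (insert v S) := by
  refine HasCliqueAttachments.of_subset (fun _ _ w hw ↦ (hS w hw).elim)
    (Set.subset_insert v S) ?_
  rintro a ⟨rfl | ha, ha'⟩ b w hw
  · by_contra hab
    have hb : b ∈ S := hw.end_mem.resolve_left hw.ne.symm
    refine hS (.cons hxv w) ⟨hx, hb, ?_, ?_, ?_⟩
    · rintro rfl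
      exact hab hxv.symm
    · exact hw.two_le_length.trans (Nat.le_succ _)
    · exact (hw.interiorAvoids.mono (Set.subset_insert a S)).cons hv hxv
  · exact (ha' ha).elim

lemma hasCliqueAttachments_insert_of_forall_not_adj
    (hS : ∀ ⦃a b⦄ (w : G.Walk a b), ¬ IsEar S w)
    (hno : ∀ y ∉ S, ∀ x ∈ S, ¬ G.Adj y x) :
    HasCliqueAttachments G (insert v S) := by
  refine HasCliqueAttachments.of_subset (fun _ _ w hw ↦ (hS w hw).elim)
    (Set.subset_insert v S) ?_
  rintro a ⟨rfl | ha, ha'⟩ b w hw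
  · have hlen := hw.two_le_length
    have hlast : G.Adj w.penultimate b := w.adj_penultimate (by
      rw [Walk.not_nil_iff_lt_length]; omega)
    refine (hno _ ?_ b (hw.end_mem.resolve_left hw.ne.symm) hlast).elim
    exact hw.interiorAvoids.mono (Set.subset_insert a S) (by omega) (by omega)
  · exact (ha' ha).elim

lemma exists_insert_of_not_isEar (hS : ∀ ⦃a b⦄ (w : G.Walk a b), ¬ IsEar S w)
    (hH : IsChordalCompletion G S H) (hne : S ≠ Set.univ) :
    ∃ v ∉ S, HasCliqueAttachments G (insert v S) ∧
      ∃ H', IsChordalCompletion G (insert v S) H' := by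
  obtain ⟨v, hv, hins⟩ : ∃ v ∉ S, HasCliqueAttachments G (insert v S) := by
    by_cases hno : ∀ y ∉ S, ∀ x ∈ S, ¬ G.Adj y x
    · obtain ⟨v, hv⟩ := (Set.ne_univ_iff_exists_notMem S).1 hne
      exact ⟨v, hv, hasCliqueAttachments_insert_of_forall_not_adj hS hno⟩
    · push Not at hno
      obtain ⟨v, hv, x, hx, hvx⟩ := hno
      exact ⟨v, hv, hasCliqueAttachments_insert_of_adj hS hv hx hvx.symm⟩
  have hN := subsingleton_neighbors_of_not_isEar hS hv
  exact ⟨v, hv, hins, _, hH.insert_vertex hv (Set.sep_subset _ _) (hN.pairwise _)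
    ((Set.encard_le_one_iff_subsingleton.2 hN).trans one_le_two) fun x hx hvx ↦ ⟨hx, hvx⟩⟩

lemma HasCliqueAttachments.adj_start_of_walk_from_ear
    (hS : HasCliqueAttachments G S) (hw : IsEar S w) (hx : x ∈ w.support)
    (hxS : x ∉ S) {u : G.Walk x y} (hu : InteriorAvoids u S) (hy : y ∈ S) (hay : a ≠ y) :
    G.Adj a y := by
  obtain ⟨i, rfl, -⟩ := Walk.mem_support_iff_exists_getVert.1 hx
  by_contra hnadj
  exact hnadj (hS _ (((hw.interiorAvoids.take i).append hu hxS).isEar_of_not_adj hw.start_mem hy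
    hay hnadj))

-- Otherwise `y` would form a triangle with the ends of the ear.
lemma HasCliqueAttachments.eq_end_of_walk_from_ear (htf : TriangleFree G)
    (hS : HasCliqueAttachments G S) (hw : IsEar S w) (hx : x ∈ w.support) (hxS : x ∉ S)
    {u : G.Walk x y} (hu : InteriorAvoids u S) (hy : y ∈ S) : y = a ∨ y = b := by
  by_contra! hne
  have hay := hS.adj_start_of_walk_from_ear hw hx hxS hu hy hne.1.symm
  have hby := hS.adj_start_of_walk_from_ear hw.reverse (by simpa using hx) hxS hu hy hne.2.symm
  exact htf.not_adj (hS w hw) hby hay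

lemma HasCliqueAttachments.union_ear (htf : TriangleFree G)
    (hci : ChordlessCyclesShareAtMostOneEdge G) (hS : HasCliqueAttachments G S)
    (hw : IsShortestEar S w) : HasCliqueAttachments G (S ∪ {x | x ∈ w.support}) := by
  have hcycle : HasCliqueAttachments G {x | x ∈ w.support} := by
    convert (hw.isInducedCycle (hS w hw.toIsEar)).hasCliqueAttachments htf hci using 1
    ext x
    simp [Walk.mem_support_iff_exists_getVert, and_comm]
  refine hS.of_subset Set.subset_union_left fun x hx y u hu ↦ ?_
  have hxw : x ∈ w.support := hx.1.resolve_left hx.2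
  refine hcycle u ⟨hxw, ?_, hu.ne, hu.two_le_length,
    hu.interiorAvoids.mono Set.subset_union_right⟩
  refine hu.end_mem.elim (fun hy ↦ ?_) id
  obtain rfl | rfl := hS.eq_end_of_walk_from_ear htf hw.toIsEar hxw hx.2
    (hu.interiorAvoids.mono Set.subset_union_left) hy
  · exact w.start_mem_support
  · exact w.end_mem_support

lemma HasCliqueAttachments.eq_prev_or_eq_end_of_adj (htf : TriangleFree G)
    (hS : HasCliqueAttachments G S) (hw : IsShortestEar S w) {k : ℕ} (hk : k + 1 < w.length)
    (hx : x ∈ S ∪ w.getVert '' Set.Iic k) (hadj : G.Adj (w.getVert (k + 1)) x) :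
    x = w.getVert k ∨ x = b := by
  have hcycle := hw.isInducedCycle (hS w hw.toIsEar)
  have path_case {j} (hj : j ≤ k) (h : G.Adj (w.getVert (k + 1)) (w.getVert j)) :
      w.getVert j = w.getVert k := by
    have := (hcycle.adj_iff (Nat.lt_succ_of_le hj) (by omega)).1 h.symm
    congr 1
    omega
  obtain hx | ⟨j, hj, rfl⟩ := hx
  · obtain rfl | rfl := hS.eq_end_of_walk_from_ear htf hw.toIsEar (w.getVert_mem_support (k + 1))
      (hw.interiorAvoids k.succ_pos hk) (u := .cons hadj .nil)
      (interiorAvoids_of_length_le_one le_rfl) hx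
    · exact .inl (by simpa using path_case k.zero_le (by simpa using hadj))
    · exact .inr rfl
  · exact .inl (path_case hj hadj)

-- The region bounded by the ear is triangulated by joining every vertex of the ear to `b`.
lemma IsChordalCompletion.exists_union_ear_initial (htf : TriangleFree G)
    (hS : HasCliqueAttachments G S) (hH : IsChordalCompletion G S H) (hw : IsShortestEar S w)
    {k : ℕ} (hk : k < w.length) :
    ∃ H', IsChordalCompletion G (S ∪ w.getVert '' Set.Iic k) H' ∧ H'.Adj (w.getVert k) b := by
  induction k with
  | zero =>
    refine ⟨H, ?_, ?_⟩
    · convert hH using 1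
      have hzero : Set.Iic 0 = {0} := Set.Iic_bot
      simpa [hzero] using hw.start_mem
    · simpa using hH.adj hw.start_mem hw.end_mem (hS w hw.toIsEar)
  | succ k ih =>
    obtain ⟨H', hH', hadj⟩ := ih (by omega)
    have hv : w.getVert (k + 1) ∉ S ∪ w.getVert '' Set.Iic k := by
      rintro (hmem | ⟨j, hj, heq⟩)
      · exact hw.interiorAvoids k.succ_pos hk hmem
      · exact hw.getVert_ne (Nat.lt_succ_of_le hj) hk.le heq
    have hNS : {w.getVert k, b} ⊆ S ∪ w.getVert '' Set.Iic k :=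
      Set.pair_subset (.inr ⟨k, Set.self_mem_Iic, rfl⟩) (.inl hw.end_mem)
    have hset : S ∪ w.getVert '' Set.Iic (k + 1) =
        insert (w.getVert (k + 1)) (S ∪ w.getVert '' Set.Iic k) := by
      rw [← Order.succ_eq_add_one, Order.Iic_succ, Set.image_insert_eq, Set.union_insert]
    have hcard : ({w.getVert k, b} : Set V).encard ≤ 2 :=
      (Set.encard_insert_le _ _).trans_eq (by rw [Set.encard_singleton, one_add_one_eq_two])
    rw [hset]
    refine ⟨_, hH'.insert_vertex hv hNS (isClique_pair.2 fun _ ↦ hadj) hcard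
      fun x hx h ↦ hS.eq_prev_or_eq_end_of_adj htf hw hk hx h, Or.inr ?_⟩
    exact (fromRel_adj _ _ _).2 ⟨ne_of_mem_of_not_mem (hNS (.inr rfl)) hv |>.symm,
      .inl ⟨rfl, .inr rfl⟩⟩

lemma IsChordalCompletion.exists_union_ear (htf : TriangleFree G)
    (hS : HasCliqueAttachments G S) (hH : IsChordalCompletion G S H) (hw : IsShortestEar S w) :
    ∃ H', IsChordalCompletion G (S ∪ {x | x ∈ w.support}) H' := by
  have hlen := hw.two_le_length
  obtain ⟨H', hH', -⟩ := hH.exists_union_ear_initial htf hS hw (k := w.length - 1) (by omega)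
  refine ⟨H', ?_⟩
  convert hH' using 1
  refine (Set.union_subset Set.subset_union_left fun x hx ↦ ?_).antisymm
    (Set.union_subset_union_right S ?_)
  · obtain ⟨i, rfl, hi⟩ := Walk.mem_support_iff_exists_getVert.1 hx
    obtain rfl | hi := hi.eq_or_lt
    · exact .inl (w.getVert_length.symm ▸ hw.end_mem)
    · exact .inr ⟨i, Set.mem_Iic.2 (by omega), rfl⟩
  · rintro _ ⟨i, -, rfl⟩
    exact w.getVert_mem_support i

lemma HasCliqueAttachments.exists_ssuperset (htf : TriangleFree G)
    (hci : ChordlessCyclesShareAtMostOneEdge G) (hS : HasCliqueAttachments G S)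
    (hH : IsChordalCompletion G S H) (hne : S ≠ Set.univ) :
    ∃ T, S ⊂ T ∧ HasCliqueAttachments G T ∧ ∃ H', IsChordalCompletion G T H' := by
  by_cases hear : ∃ (a b : V) (w : G.Walk a b), IsEar S w
  · obtain ⟨a, b, w, hw⟩ := hear
    obtain ⟨u, hu⟩ := hw.exists_isShortestEar
    refine ⟨S ∪ {x | x ∈ u.support}, Set.ssubset_iff_subset_ne.2 ⟨Set.subset_union_left, ?_⟩,
      hS.union_ear htf hci hu, hH.exists_union_ear htf hS hu⟩
    intro heq
    have hmem : u.getVert 1 ∈ S := heq ▸ .inr (u.getVert_mem_support 1)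
    exact hu.interiorAvoids one_pos hu.two_le_length hmem
  · push Not at hear
    obtain ⟨v, hv, hT⟩ := exists_insert_of_not_isEar hear hH hne
    exact ⟨insert v S, Set.ssubset_insert hv, hT⟩

lemma exists_isChordalCompletion_univ [Finite V] (htf : TriangleFree G)
    (hci : ChordlessCyclesShareAtMostOneEdge G) : ∃ H, IsChordalCompletion G Set.univ H := by
  let good : Set (Set V) :=
    {S | HasCliqueAttachments G S ∧ ∃ H, IsChordalCompletion G S H}
  have hempty : ∅ ∈ good :=
    ⟨fun _ _ _ hw ↦ hw.start_mem.elim, ⊥, .empty, fun _ hx ↦ hx.elim⟩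
  obtain ⟨S, ⟨hS, H, hH⟩, hmax⟩ := (Set.toFinite good).exists_maximal ⟨∅, hempty⟩
  suffices S = Set.univ from ⟨H, this ▸ hH⟩
  by_contra hne
  obtain ⟨T, hST, hT⟩ := hS.exists_ssuperset htf hci hH hne
  exact hST.not_subset (hmax hT hST.subset)

end Growth

/-- A triangle-free graph in which any two chordless cycles share at most one edge
is planar. -/
theorem ci_graph_planar [Fintype V] {G : SimpleGraph V}
    (htf : TriangleFree G) (hci : ChordlessCyclesShareAtMostOneEdge G) :
    IsPlanar G := by
  obtain ⟨H, hH⟩ := exists_isChordalCompletion_univ htf hci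
  exact hH.isChordalTwoDegenerate.isPlanar.mono fun _ _ hxy ↦
    hH.adj (Set.mem_univ _) (Set.mem_univ _) hxy
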